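/- (Quantitative wedge-of-the-edge theorem.) There exist universal constants δ > 0 and ε > 0 (independent of the dimension d) with the following property: let d ≥ 1 and let (h_n)_{n≥0} be a sequence of polynomials in d variables with complex coefficients such that each h_n is homogeneous of degree n, and suppose that Σ_{n=0}^∞ |h_n(x)| ≤ 1 for every x ∈ [0,1]^d. Then for every z ∈ ℂ^d with ‖z‖ < δ the series Σ_{n=0}^∞ h_n(z) converges, the resulting function is analytic on the complex ball B_ℂ(0,δ) ⊆ ℂ^d, and it is bounded in modulus by ε there. -/

import Mathlib

lemma wedge_prod_nodes (n k : ℕ) (hk : k ≤ n) :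
    ∏ j ∈ (Finset.range (n + 1)).erase k, |(k : ℝ) - j| = (k.factorial : ℝ) * (n - k).factorial := by
  have h1 : (Finset.range (n + 1)).erase k = Finset.range k ∪ Finset.Ico (k + 1) (n + 1) := by
    ext j; simp; omega
  have h2 : Disjoint (Finset.range k) (Finset.Ico (k + 1) (n + 1)) := by
    rw [Finset.disjoint_left]; intro j; simp; omega
  rw [h1, Finset.prod_union h2]
  congr 1
  · rw [← Finset.prod_range_reflect, ← Finset.prod_range_add_one_eq_factorial]
    push_cast
    refine Finset.prod_congr rfl fun j hj => ?_
    have hj := Finset.mem_range.1 hj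
    have : ((k - 1 - j : ℕ) : ℝ) = k - 1 - j := by
      rw [Nat.cast_sub (by omega), Nat.cast_sub (by omega)]; simp
    rw [this, abs_of_nonneg] <;> ring_nf
    positivity
  · rw [Finset.prod_Ico_eq_prod_range, ← Finset.prod_range_add_one_eq_factorial]
    push_cast
    refine Finset.prod_congr rfl fun j hj => ?_
    rw [abs_sub_comm, abs_of_nonneg] <;> ring_nf
    positivity

lemma wedge_interp (n : ℕ) (q : Polynomial ℂ) (hq : q.natDegree ≤ n) (M : ℝ)
    (hM : ∀ t : ℝ, 1 ≤ t → t ≤ 2 → ‖q.eval (t : ℂ)‖ ≤ M) (w : ℂ) (hw : ‖w‖ ≤ 1) :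
    ‖q.eval w‖ ≤ M * 18 ^ n := by
  have hM0 : 0 ≤ M := (norm_nonneg _).trans (hM 1 le_rfl (by norm_num))
  rcases Nat.eq_zero_or_pos n with rfl | hn
  · rw [Polynomial.eq_C_of_natDegree_le_zero hq] at hM ⊢
    simpa using hM 1 le_rfl (by norm_num)
  have hn' : (0 : ℝ) < n := by exact_mod_cast hn
  set v : ℕ → ℂ := fun k => ((1 + k / n : ℝ) : ℂ) with hv
  have hvs : Set.InjOn v (Finset.range (n + 1) : Finset ℕ) := by
    intro a _ b _ hab
    have : (1 + a / n : ℝ) = 1 + b / n := Complex.ofReal_injective hab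
    field_simp at this
    exact_mod_cast (add_left_cancel this)
  have hdeg : q.degree < (Finset.range (n + 1)).card := by
    rw [Finset.card_range]
    exact (Polynomial.degree_le_of_natDegree_le hq).trans_lt (by exact_mod_cast n.lt_succ_self)
  rw [Lagrange.eq_interpolate hvs hdeg, Lagrange.interpolate_apply, Polynomial.eval_finsetSum]
  have hterm : ∀ k ∈ Finset.range (n + 1),
      ‖(Polynomial.C (q.eval (v k)) * Lagrange.basis (Finset.range (n + 1)) v k).eval w‖
        ≤ M * (3 ^ n * ((n : ℝ) ^ n / n.factorial)) * (n.choose k) := by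
    intro k hk
    have hkn : k ≤ n := by simpa [Nat.lt_succ_iff] using hk
    rw [Polynomial.eval_mul, Polynomial.eval_C, norm_mul, mul_assoc]
    have hkd : (k : ℝ) / n ≤ 1 := by rw [div_le_one hn']; exact_mod_cast hkn
    refine mul_le_mul (hM _ (by simp; positivity) (by linarith)) ?_ (norm_nonneg _) hM0
    rw [Lagrange.basis, Polynomial.eval_prod, norm_prod]
    have hcard : ((Finset.range (n + 1)).erase k).card = n := by
      rw [Finset.card_erase_of_mem hk]; simp
    calc _ ≤ ∏ j ∈ (Finset.range (n + 1)).erase k, (3 * n / |(k : ℝ) - j|) := by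
            refine Finset.prod_le_prod (fun _ _ => norm_nonneg _) fun j hj => ?_
            have hjn : j ≤ n := by
              have := Finset.mem_of_mem_erase hj
              simpa [Nat.lt_succ_iff] using this
            have hjd : (j : ℝ) / n ≤ 1 := by rw [div_le_one hn']; exact_mod_cast hjn
            have h3 : ‖w - v j‖ ≤ 3 := by
              refine (norm_sub_le _ _).trans ?_
              have : ‖v j‖ ≤ 2 := by
                rw [hv]
                simp only [Complex.norm_real, Real.norm_eq_abs]
                rw [abs_of_nonneg (by positivity)]; linarith
              linarith
            have h4 : ‖v k - v j‖ = |(k : ℝ) - j| / n := by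
              rw [hv]
              simp only [← Complex.ofReal_sub, Complex.norm_real, Real.norm_eq_abs]
              rw [← abs_of_pos hn', ← abs_div, abs_of_pos hn']
              congr 1; ring
            rw [Lagrange.basisDivisor]
            simp only [Polynomial.eval_mul, Polynomial.eval_C, Polynomial.eval_sub,
              Polynomial.eval_X, norm_mul, norm_inv]
            rw [h4, inv_div, div_mul_eq_mul_div, mul_comm (n : ℝ)]
            gcongr
      _ = (3 * n) ^ n / (k.factorial * (n - k).factorial) := by
            rw [Finset.prod_div_distrib, Finset.prod_const, hcard, wedge_prod_nodes n k hkn]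
      _ ≤ _ := by
            rw [Nat.cast_choose ℝ hkn, mul_pow]
            have := n.factorial_pos
            apply le_of_eq
            field_simp
  refine (norm_sum_le _ _).trans ((Finset.sum_le_sum hterm).trans ?_)
  rw [← Finset.mul_sum]
  have hs : ∑ k ∈ Finset.range (n + 1), (n.choose k : ℝ) = 2 ^ n := by
    exact_mod_cast Nat.sum_range_choose n
  rw [hs, mul_assoc]
  refine mul_le_mul_of_nonneg_left ?_ hM0
  have he : (n : ℝ) ^ n / n.factorial ≤ 3 ^ n := by
    refine (Real.pow_div_factorial_le_exp (n : ℝ) hn'.le n).trans ?_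
    rw [← Real.exp_one_pow]
    gcongr
    exact Real.exp_one_lt_d9.le.trans (by norm_num)
  calc _ ≤ (3 : ℝ) ^ n * 3 ^ n * 2 ^ n := by gcongr
    _ = 18 ^ n := by rw [← mul_pow, ← mul_pow]; norm_num

lemma wedge_homog {d n : ℕ} (g : MvPolynomial (Fin d) ℂ) (hg : g.IsHomogeneous n)
    (t : ℂ) (z : Fin d → ℂ) :
    MvPolynomial.eval (fun i => t * z i) g = t ^ n * MvPolynomial.eval z g := by
  rw [MvPolynomial.eval_eq', MvPolynomial.eval_eq', Finset.mul_sum]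
  refine Finset.sum_congr rfl fun α hα => ?_
  have h1 : ∑ i, α i = n := by
    simpa [Finsupp.weight_apply, Finsupp.sum_fintype] using hg (MvPolynomial.mem_support_iff.1 hα)
  simp_rw [mul_pow]
  rw [Finset.prod_mul_distrib, Finset.prod_pow_eq_pow_sum, h1]
  ring

lemma wedge_line {d n : ℕ} (g : MvPolynomial (Fin d) ℂ) (hg : g.IsHomogeneous n)
    (a b : Fin d → ℂ) (M : ℝ)
    (hM : ∀ t : ℝ, 1 ≤ t → t ≤ 2 → ‖MvPolynomial.eval (fun i => a i + t * b i) g‖ ≤ M)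
    (w : ℂ) (hw : ‖w‖ ≤ 1) :
    ‖MvPolynomial.eval (fun i => a i + w * b i) g‖ ≤ M * 18 ^ n := by
  set q : Polynomial ℂ := MvPolynomial.aeval
    (fun i => Polynomial.C (b i) * Polynomial.X + Polynomial.C (a i)) g with hq
  have hqe : ∀ t, q.eval t = MvPolynomial.eval (fun i => a i + t * b i) g := by
    intro t
    have : q.eval t = Polynomial.aeval t q := by simp
    rw [this, hq, MvPolynomial.comp_aeval_apply, ← MvPolynomial.aeval_eq_eval]
    simp only [Polynomial.aeval_C, map_add, map_mul, Polynomial.aeval_X]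
    congr 2
    ext i
    simp; ring
  have hd : q.natDegree ≤ n := by
    have := MvPolynomial.aeval_natDegree_le g hg.totalDegree_le
      (fun i => Polynomial.C (b i) * Polynomial.X + Polynomial.C (a i))
      (fun i => Polynomial.natDegree_linear_le)
    simpa using this
  rw [← hqe]
  refine wedge_interp n q hd M (fun t h1 h2 => ?_) w hw
  rw [hqe]; exact hM t h1 h2

lemma wedge_polydisc {d n : ℕ} (g : MvPolynomial (Fin d) ℂ) (hg : g.IsHomogeneous n)
    (hb : ∀ x : Fin d → ℝ, (∀ i, x i ∈ Set.Icc (0 : ℝ) 1) →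
      ‖MvPolynomial.eval (fun i => (x i : ℂ)) g‖ ≤ 1)
    (z : Fin d → ℂ) (hz : ∀ i, ‖z i‖ ≤ 1) :
    ‖MvPolynomial.eval z g‖ ≤ 2916 ^ n := by
  have key : ∀ s : ℝ, 1 ≤ s → s ≤ 2 →
      ‖MvPolynomial.eval (fun i => z i + s * 3) g‖ ≤ 9 ^ n * 18 ^ n := by
    intro s hs1 hs2
    have := wedge_line g hg (fun i => (((z i).re + s * 3 : ℝ) : ℂ)) (fun i => ((z i).im : ℂ))
      (9 ^ n) ?_ Complex.I (by simp)
    · convert this using 4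
      ext i
      apply Complex.ext <;> simp
    · intro t ht1 ht2
      have h9 := wedge_homog g hg 9
        (fun i => ((((z i).re + s * 3 + t * (z i).im) / 9 : ℝ) : ℂ))
      have e : (fun i => (((z i).re + s * 3 : ℝ) : ℂ) + (t : ℂ) * ((z i).im : ℂ)) =
        fun i => 9 * ((((z i).re + s * 3 + t * (z i).im) / 9 : ℝ) : ℂ) := by
        ext i; push_cast; ring
      rw [e, h9, norm_mul, norm_pow]
      have hx := hb (fun i => ((z i).re + s * 3 + t * (z i).im) / 9) ?_
      · have : ‖(9 : ℂ)‖ = 9 := by simp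
        rw [this]
        exact mul_le_of_le_one_right (by positivity) hx
      · intro i
        have h1 := abs_le.1 ((Complex.abs_re_le_norm (z i)).trans (hz i))
        have h2 := abs_le.1 ((Complex.abs_im_le_norm (z i)).trans (hz i))
        constructor
        · apply div_nonneg _ (by norm_num)
          nlinarith
        · rw [div_le_one (by norm_num)]
          nlinarith
  have := wedge_line g hg z (fun _ => 3) _ key 0 (by simp)
  simp only [zero_mul, add_zero] at this
  refine this.trans (le_of_eq ?_)
  rw [← mul_pow, ← mul_pow]; norm_num

lemma wedge_coeff {d n : ℕ} (g : MvPolynomial (Fin d) ℂ) (hg : g.IsHomogeneous n) (M : ℝ)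
    (hM : ∀ z : Fin d → ℂ, (∀ i, ‖z i‖ ≤ 1) → ‖MvPolynomial.eval z g‖ ≤ M)
    (α : Fin d →₀ ℕ) (hα : α ∈ g.support) : ‖g.coeff α‖ ≤ M := by
  have hle : ∀ β ∈ g.support, ∀ i, β i < n + 1 := by
    intro β hβ i
    have h1 : ∑ i, β i = n := by
      simpa [Finsupp.weight_apply, Finsupp.sum_fintype] using hg (MvPolynomial.mem_support_iff.1 hβ)
    have := Finset.single_le_sum (f := fun i => β i) (fun _ _ => Nat.zero_le _) (Finset.mem_univ i)
    omega
  obtain ⟨ζ, hζ⟩ : ∃ ζ : ℂ, IsPrimitiveRoot ζ (n + 1) :=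
    ⟨_, Complex.isPrimitiveRoot_exp (n + 1) (by omega)⟩
  have hζ0 : ζ ≠ 0 := hζ.ne_zero (by omega)
  have hζn : ‖ζ‖ = 1 := hζ.norm'_eq_one (by omega)
  have hgeom : ∀ a b : ℕ, a < n + 1 → b < n + 1 →
      ∑ k ∈ Finset.range (n + 1), (ζ ^ k) ^ a * (ζ⁻¹ ^ k) ^ b =
        if a = b then ((n + 1 : ℕ) : ℂ) else 0 := by
    intro a b ha hb
    have e : ∀ k, (ζ ^ k) ^ a * (ζ⁻¹ ^ k) ^ b = (ζ ^ a * ζ⁻¹ ^ b) ^ k := by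
      intro k; rw [mul_pow]; simp only [← pow_mul, mul_comm]
    simp_rw [e]
    split_ifs with h
    · subst h
      rw [← mul_pow, mul_inv_cancel₀ hζ0]; simp
    · have hr : ζ ^ a * ζ⁻¹ ^ b ≠ 1 := by
        intro hr
        apply h
        apply hζ.pow_inj ha hb
        rwa [inv_pow, mul_inv_eq_one₀ (pow_ne_zero _ hζ0)] at hr
      have hr1 : (ζ ^ a * ζ⁻¹ ^ b) ^ (n + 1) = 1 := by
        rw [mul_pow, ← pow_mul, ← pow_mul, mul_comm a, mul_comm b, pow_mul, pow_mul, inv_pow,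
          hζ.pow_eq_one]; simp
      rw [geom_sum_eq hr, hr1]; simp
  set P := Fintype.piFinset (fun _ : Fin d => Finset.range (n + 1)) with hP
  have hPc : P.card = (n + 1) ^ d := by simp [hP]
  have hsum : ∑ k ∈ P, MvPolynomial.eval (fun i => ζ ^ k i) g * ∏ i, (ζ⁻¹ ^ k i) ^ α i =
      ((n + 1 : ℕ) : ℂ) ^ d * g.coeff α := by
    simp_rw [MvPolynomial.eval_eq', Finset.sum_mul]
    rw [Finset.sum_comm]
    rw [Finset.sum_eq_single_of_mem α hα]
    · simp_rw [mul_assoc, ← Finset.prod_mul_distrib]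
      rw [← Finset.mul_sum, hP,
        ← Finset.prod_univ_sum (fun _ => Finset.range (n + 1))
          (fun i k => (ζ ^ k) ^ α i * (ζ⁻¹ ^ k) ^ α i)]
      rw [Finset.prod_congr rfl fun i _ => hgeom _ _ (hle α hα i) (hle α hα i)]
      simp [mul_comm]
    · intro β hβ hne
      simp_rw [mul_assoc, ← Finset.prod_mul_distrib]
      rw [← Finset.mul_sum, hP,
        ← Finset.prod_univ_sum (fun _ => Finset.range (n + 1))
          (fun i k => (ζ ^ k) ^ β i * (ζ⁻¹ ^ k) ^ α i)]
      rw [Finset.prod_congr rfl fun i _ => hgeom _ _ (hle β hβ i) (hle α hα i)]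
      obtain ⟨i, hi⟩ : ∃ i, β i ≠ α i := by
        by_contra! h; exact hne (Finsupp.ext h)
      rw [Finset.prod_eq_zero (Finset.mem_univ i) (if_neg hi), mul_zero]
  have hbound : ‖((n + 1 : ℕ) : ℂ) ^ d * g.coeff α‖ ≤ ((n + 1 : ℕ) : ℝ) ^ d * M := by
    rw [← hsum]
    refine (norm_sum_le _ _).trans ?_
    have : ((n + 1 : ℕ) : ℝ) ^ d * M = ∑ k ∈ P, M := by
      rw [Finset.sum_const, hPc, nsmul_eq_mul]; push_cast; rfl
    rw [this]
    refine Finset.sum_le_sum fun k _ => ?_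
    rw [norm_mul, norm_prod]
    simp only [norm_pow, norm_inv, hζn, inv_one, one_pow, Finset.prod_const_one, mul_one]
    exact hM _ fun i => by simp [hζn]
  rw [norm_mul, norm_pow, Complex.norm_natCast] at hbound
  exact le_of_mul_le_mul_left hbound (by positivity)

lemma wedge_multilinear {d n : ℕ} (g : MvPolynomial (Fin d) ℂ) (hg : g.IsHomogeneous n) (M : ℝ)
    (hM : ∀ z : Fin d → ℂ, (∀ i, ‖z i‖ ≤ 1) → ‖MvPolynomial.eval z g‖ ≤ M) :
    ∃ p : ContinuousMultilinearMap ℂ (fun _ : Fin n => EuclideanSpace ℂ (Fin d)) ℂ,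
      (∀ z, p (fun _ => z) = MvPolynomial.eval (fun i => z i) g) ∧
      ‖p‖ ≤ ((n : ℝ) + 1) ^ d * M := by
  have hM0 : 0 ≤ M := (norm_nonneg _).trans (hM 0 (by simp))
  have hmono : ∀ α : Fin d →₀ ℕ, ∃ p : ContinuousMultilinearMap ℂ
      (fun _ : Fin n => EuclideanSpace ℂ (Fin d)) ℂ, α ∈ g.support →
      ((∀ z, p (fun _ => z) = g.coeff α * ∏ i, z i ^ α i) ∧ ‖p‖ ≤ M) := by
    intro α
    by_cases hα : α ∈ g.support
    swap
    · exact ⟨0, fun h => absurd h hα⟩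
    have h1 : ∑ i, α i = n := by
      simpa [Finsupp.weight_apply, Finsupp.sum_fintype] using hg (MvPolynomial.mem_support_iff.1 hα)
    have hlen : α.toMultiset.toList.length = n := by
      rw [Multiset.length_toList, Finsupp.card_toMultiset, ← h1]
      simp [Finsupp.sum_fintype]
    let f : Fin n → Fin d := fun j => α.toMultiset.toList.get (j.cast hlen.symm)
    let p : ContinuousMultilinearMap ℂ (fun _ : Fin n => EuclideanSpace ℂ (Fin d)) ℂ :=
      g.coeff α • (ContinuousMultilinearMap.mkPiAlgebra ℂ (Fin n) ℂ).compContinuousLinearMap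
        (fun j => EuclideanSpace.proj (f j))
    have hp : ∀ v, p v = g.coeff α * ∏ j, v j (f j) := by
      intro v; simp [p]
    refine ⟨p, fun _ => ⟨fun z => ?_, ?_⟩⟩
    · rw [hp]
      congr 1
      have e1 : ∏ j : Fin n, z (f j) = (α.toMultiset.toList.map (fun i => z i)).prod := by
        rw [← Fin.prod_univ_fun_getElem]
        exact Fintype.prod_equiv (finCongr hlen.symm) _ _ (fun j => rfl)
      rw [e1, ← Multiset.prod_coe, ← Multiset.map_coe, Multiset.coe_toList,
        Finsupp.toMultiset_map, Finsupp.prod_toMultiset]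
      rw [Finsupp.prod_mapDomain_index (by simp) (by intros; rw [pow_add])]
      rw [Finsupp.prod_fintype _ _ (by simp)]
    · refine ContinuousMultilinearMap.opNorm_le_bound hM0 fun v => ?_
      rw [hp, norm_mul, norm_prod]
      refine mul_le_mul (wedge_coeff g hg M hM α hα) ?_ (by positivity) hM0
      exact Finset.prod_le_prod (fun _ _ => norm_nonneg _) fun j _ => PiLp.norm_apply_le _ _
  choose p hp using hmono
  refine ⟨∑ α ∈ g.support, p α, fun z => ?_, ?_⟩
  · rw [_root_.sum_apply, MvPolynomial.eval_eq']
    exact Finset.sum_congr rfl fun α hα => (hp α hα).1 z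
  · refine (norm_sum_le _ _).trans ((Finset.sum_le_sum fun α hα => (hp α hα).2).trans ?_)
    rw [Finset.sum_const, nsmul_eq_mul]
    refine mul_le_mul_of_nonneg_right ?_ hM0
    have hc : g.support.card ≤ (Fintype.piFinset (fun _ : Fin d => Finset.range (n + 1))).card := by
      refine Finset.card_le_card_of_injOn (fun α i => α i) ?_ ?_
      · intro β hβ
        have h1 : ∑ i, β i = n := by
          simpa [Finsupp.weight_apply, Finsupp.sum_fintype] using hg (MvPolynomial.mem_support_iff.1 hβ)
        simp only [Finset.mem_coe, Fintype.mem_piFinset, Finset.mem_range]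
        intro i
        have := Finset.single_le_sum (f := fun i => β i) (fun _ _ => Nat.zero_le _)
          (Finset.mem_univ i)
        omega
      · intro a _ b _ hab
        exact DFunLike.coe_injective hab
    simp only [Fintype.card_piFinset, Finset.card_range, Finset.prod_const, Finset.card_univ,
      Fintype.card_fin] at hc
    exact_mod_cast hc

/-- The quantitative wedge-of-the-edge theorem: there are universal (dimension
independent) constants `δ, ε > 0` such that any series of homogeneous polynomials
whose sum of moduli is bounded by `1` on the unit cube `[0,1]^d` defines an
analytic function on the complex ball of radius `δ` which is bounded by `ε` there. -/
theorem quantitative_wedge_of_the_edge :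
    ∃ δ ε : ℝ, 0 < δ ∧ 0 < ε ∧
      ∀ (d : ℕ), 1 ≤ d →
        ∀ h : ℕ → MvPolynomial (Fin d) ℂ,
          (∀ n, (h n).IsHomogeneous n) →
          (∀ x : Fin d → ℝ, (∀ i, x i ∈ Set.Icc (0 : ℝ) 1) →
            ∀ N : ℕ, ∑ n ∈ Finset.range N,
              ‖MvPolynomial.eval (fun i => (x i : ℂ)) (h n)‖ ≤ 1) →
          (∀ z : EuclideanSpace ℂ (Fin d), ‖z‖ < δ →
            Summable fun n => MvPolynomial.eval (fun i => z i) (h n)) ∧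
          AnalyticOnNhd ℂ
            (fun z : EuclideanSpace ℂ (Fin d) =>
              ∑' n, MvPolynomial.eval (fun i => z i) (h n))
            (Metric.ball 0 δ) ∧
          (∀ z : EuclideanSpace ℂ (Fin d), ‖z‖ < δ →
            ‖∑' n, MvPolynomial.eval (fun i => z i) (h n)‖ ≤ ε) := by
  refine ⟨1 / 5832, 2, by norm_num, by norm_num, ?_⟩
  intro d _ h hh hb
  have hb1 : ∀ n, ∀ x : Fin d → ℝ, (∀ i, x i ∈ Set.Icc (0 : ℝ) 1) →
      ‖MvPolynomial.eval (fun i => (x i : ℂ)) (h n)‖ ≤ 1 := fun n x hx =>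
    (Finset.single_le_sum (f := fun n => ‖MvPolynomial.eval (fun i => (x i : ℂ)) (h n)‖)
      (fun _ _ => norm_nonneg _) (Finset.self_mem_range_succ n)).trans (hb x hx (n + 1))
  have hpd := fun n => wedge_polydisc (h n) (hh n) (hb1 n)
  have hball : ∀ z : EuclideanSpace ℂ (Fin d), ‖z‖ < 1 / 5832 → ∀ n,
      ‖MvPolynomial.eval (fun i => z i) (h n)‖ ≤ (1 / 2) ^ n := by
    intro z hz n
    have e : (fun i => z i) = fun i => (1 / 5832 : ℂ) * (5832 * z i) := by
      ext i; ring
    rw [e, wedge_homog (h n) (hh n), norm_mul, norm_pow]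
    have h1 := hpd n (fun i => 5832 * z i) (fun i => by
      have := (PiLp.norm_apply_le z i).trans hz.le
      rw [norm_mul]
      have h5 : ‖(5832 : ℂ)‖ = 5832 := by simp
      rw [h5]; linarith)
    have h5 : ‖(1 / 5832 : ℂ)‖ = 1 / 5832 := by simp
    rw [h5]
    calc _ ≤ (1 / 5832 : ℝ) ^ n * 2916 ^ n := by gcongr
      _ = _ := by rw [← mul_pow]; norm_num
  have hsn : Summable fun n : ℕ => (1 / 2 : ℝ) ^ n := summable_geometric_two
  have hsum : ∀ z : EuclideanSpace ℂ (Fin d), ‖z‖ < 1 / 5832 →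
      Summable fun n => MvPolynomial.eval (fun i => z i) (h n) := fun z hz =>
    Summable.of_norm_bounded hsn (hball z hz)
  refine ⟨hsum, ?_, fun z hz => ?_⟩
  · choose p hp1 hp2 using fun n => wedge_multilinear (h n) (hh n) _ (hpd n)
    let P : FormalMultilinearSeries ℂ (EuclideanSpace ℂ (Fin d)) ℂ := p
    have hlim := tendsto_pow_const_mul_const_pow_of_abs_lt_one d
      (r := 1 / 2) (by rw [abs_of_pos] <;> norm_num)
    obtain ⟨C, hC⟩ := hlim.bddAbove_range
    have hr : ((1 / 5832 : NNReal) : ENNReal) ≤ P.radius := by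
      refine P.le_radius_of_bound (2 * C) fun n => ?_
      have h1 : ((n + 1 : ℕ) : ℝ) ^ d * (1 / 2) ^ (n + 1) ≤ C := hC ⟨n + 1, rfl⟩
      calc ‖P n‖ * ((1 / 5832 : NNReal) : ℝ) ^ n
          ≤ (((n : ℝ) + 1) ^ d * 2916 ^ n) * (1 / 5832 : ℝ) ^ n := by
            have := hp2 n
            push_cast
            gcongr
        _ = 2 * (((n + 1 : ℕ) : ℝ) ^ d * (1 / 2) ^ (n + 1)) := by
            rw [mul_assoc, ← mul_pow, pow_succ]; push_cast; norm_num1; ring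
        _ ≤ 2 * C := by linarith
    have hball' : Metric.eball (0 : EuclideanSpace ℂ (Fin d)) ((1 / 5832 : NNReal) : ENNReal) =
        Metric.ball 0 (1 / 5832) := by
      rw [Metric.eball_coe]; norm_num
    have hF : HasFPowerSeriesOnBall (fun z : EuclideanSpace ℂ (Fin d) =>
        ∑' n, MvPolynomial.eval (fun i => z i) (h n)) P 0 ((1 / 5832 : NNReal) : ENNReal) := by
      refine ⟨hr, by simp, fun {y} hy => ?_⟩
      rw [hball', mem_ball_zero_iff] at hy
      simp only [zero_add]
      have := (hsum y hy).hasSum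
      have e : (fun n => P n fun _ : Fin n => y) =
          fun n => MvPolynomial.eval (fun i => y i) (h n) := funext fun n => hp1 n y
      rw [e]
      exact this
    rw [← hball']
    exact hF.analyticOnNhd
  · exact tsum_of_norm_bounded hasSum_geometric_two (hball z hz)
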